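/- arXiv:2505.14205 — 2 statements merged into one kernel-verified Lean document; each statement's English description precedes it below -/
import Mathlib

section
/- Let S, T be commuting homeomorphisms of a compact metric space X, let S', T' be homeomorphisms of a compact metric space Y, and let π: X → Y be a continuous surjection with π∘S = S'∘π and π∘T = T'∘π. Assume that (X,S), (X,T), (Y,S'), (Y,T') are all minimal and that π is a proximal extension both for S and for T (i.e. every pair (x₁,x₂) with π(x₁)=π(x₂) is proximal for S and proximal for T). If N_d(Y,S') = N_d(Y,T') for some d ∈ ℕ, then N_d(X,S) = N_d(X,T). -/
/-- `N_d(X,T)`: the closure in `X^d` of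
`{(T^n x, T^{2n} x, …, T^{dn} x) : x ∈ X, n ∈ ℤ}`. -/
def Nd {X : Type*} [MetricSpace X] (T : X ≃ₜ X) (d : ℕ) : Set (Fin d → X) :=
  closure {f | ∃ x : X, ∃ n : ℤ,
    ∀ i : Fin d, f i = (T.toEquiv ^ (((i : ℕ) + 1 : ℤ) * n)) x}

/-!
Let `c = (T^n x, …, T^{dn} x)`. A factor map of compact systems maps `N_d` onto `N_d`, so the
hypothesis on `Y` provides `a ∈ N_d(X,S)` with `π(aᵢ) = π(cᵢ)` for all `i`. Replacing `(a, x)` by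
points of its orbit closure under `S × ⋯ × S`, where all coordinates of `c` move with the base point
because `S` and `T` commute, proximality collapses `a` onto `c` one coordinate after another: a
coordinate once collapsed stays collapsed under `S`. So some `y` has
`(T^n y, …, T^{dn} y) ∈ N_d(X,S)`, and the set of such `y` is closed and `S`-invariant, hence
everything by minimality of `S`. Exchanging `S` and `T` gives the other inclusion.
-/

theorem mem_of_denseRange_smul {G V W : Type*} [TopologicalSpace V] [TopologicalSpace W]
    [SMul G V] [SMul G W] {N : Set W} (hN : IsClosed N) (hNG : ∀ g : G, ∀ w ∈ N, g • w ∈ N)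
    {τ : V → W} (hτ : Continuous τ) (hτG : ∀ (g : G) v, τ (g • v) = g • τ v)
    {v : V} (hdense : DenseRange fun g : G ↦ g • v) (hv : τ v ∈ N) (u : V) : τ u ∈ N :=
  hdense.induction_on (p := fun u ↦ τ u ∈ N) u (hN.preimage hτ) fun g ↦
    (hτG g v).symm ▸ hNG g (τ v) hv

section Proximal

/-- Proximality of a pair of points under an action of `G`. For a homeomorphism `T`, take `G` to be
the group of powers of `T`. The condition `inf_g dist (g • x) (g • y) = 0` is written with `ε`. -/
def IsProximalPair (G : Type*) {X : Type*} [PseudoMetricSpace X] [SMul G X] (x y : X) : Prop :=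
  ∀ ε > 0, ∃ g : G, dist (g • x) (g • y) < ε

variable {G Z X ι : Type*} [MetricSpace X]

theorem exists_eq_of_isProximalPair [TopologicalSpace Z] [SMul G Z] [SMul G X]
    {K : Set Z} (hK : IsCompact K) (hKG : ∀ g : G, ∀ z ∈ K, g • z ∈ K)
    {f h : Z → X} (hf : Continuous f) (hh : Continuous h)
    (hfG : ∀ (g : G) z, f (g • z) = g • f z) (hhG : ∀ (g : G) z, h (g • z) = g • h z)
    {z : Z} (hz : z ∈ K) (hprox : IsProximalPair G (f z) (h z)) :
    ∃ w ∈ K, f w = h w := by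
  obtain ⟨w, hw, hmin⟩ := hK.exists_isMinOn ⟨z, hz⟩ (hf.dist hh).continuousOn
  refine ⟨w, hw, dist_le_zero.1 (le_of_forall_pos_le_add fun ε hε ↦ ?_)⟩
  obtain ⟨g, hg⟩ := hprox ε hε
  calc dist (f w) (h w) ≤ dist (f (g • z)) (h (g • z)) := hmin (hKG g z hz)
    _ = dist (g • f z) (g • h z) := by rw [hfG, hhG]
    _ ≤ 0 + ε := by rw [zero_add]; exact hg.le

theorem exists_forall_eq_of_isProximalPair [TopologicalSpace Z] [SMul G Z] [SMul G X]
    {K : Set Z} (hK : IsCompact K) (hKne : K.Nonempty) (hKG : ∀ g : G, ∀ z ∈ K, g • z ∈ K)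
    {f h : ι → Z → X} (hf : ∀ i, Continuous (f i)) (hh : ∀ i, Continuous (h i))
    (hfG : ∀ i (g : G) z, f i (g • z) = g • f i z)
    (hhG : ∀ i (g : G) z, h i (g • z) = g • h i z)
    (hprox : ∀ i, ∀ z ∈ K, IsProximalPair G (f i z) (h i z)) :
    ∃ z ∈ K, ∀ i, f i z = h i z := by
  classical
  have hclosed (i : ι) : IsClosed {z | f i z = h i z} := isClosed_eq (hf i) (hh i)
  suffices hfin : ∀ s : Finset ι, (K ∩ ⋂ i ∈ s, {z | f i z = h i z}).Nonempty by
    obtain ⟨z, hzK, hz⟩ := hK.inter_iInter_nonempty _ hclosed hfin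
    exact ⟨z, hzK, Set.mem_iInter.1 hz⟩
  intro s
  induction s using Finset.induction_on with
  | empty => simpa using hKne
  | insert j s _ ih =>
    obtain ⟨z, hz⟩ := ih
    have hcompact : IsCompact (K ∩ ⋂ i ∈ s, {z | f i z = h i z}) :=
      hK.inter_right (isClosed_biInter fun i _ ↦ hclosed i)
    have hinv (g : G) : ∀ z ∈ K ∩ ⋂ i ∈ s, {z | f i z = h i z},
        g • z ∈ K ∩ ⋂ i ∈ s, {z | f i z = h i z} := by
      simp only [Set.mem_inter_iff, Set.mem_iInter₂, Set.mem_ofPred_eq]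
      exact fun z ⟨hzK, hzs⟩ ↦ ⟨hKG g z hzK, fun i hi ↦ by rw [hfG, hhG, hzs i hi]⟩
    obtain ⟨w, ⟨hwK, hws⟩, hwj⟩ := exists_eq_of_isProximalPair hcompact hinv
      (hf j) (hh j) (hfG j) (hhG j) hz (hprox j z hz.1)
    exact ⟨w, hwK, by rw [Finset.set_biInter_insert]; exact ⟨hwj, hws⟩⟩

theorem exists_mem_of_isProximalPair [CompactSpace X] [SMul G X]
    {E : Set (X × X)} (hE : IsClosed E) (hEG : ∀ g : G, ∀ p ∈ E, g • p ∈ E)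
    (hprox : ∀ p ∈ E, IsProximalPair G p.1 p.2)
    {N : Set (ι → X)} (hN : IsClosed N) (hNG : ∀ g : G, ∀ a ∈ N, g • a ∈ N)
    {τ : X → ι → X} (hτ : Continuous τ) (hτG : ∀ (g : G) x, τ (g • x) = g • τ x)
    {a : ι → X} (ha : a ∈ N) {x : X} (hax : ∀ i, (a i, τ x i) ∈ E) :
    ∃ y, τ y ∈ N := by
  let K : Set ((ι → X) × X) := {z | z.1 ∈ N} ∩ ⋂ i, {z | (z.1 i, τ z.2 i) ∈ E}
  have hcoord (i : ι) : Continuous fun z : (ι → X) × X ↦ z.1 i := by fun_prop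
  have hτcoord (i : ι) : Continuous fun z : (ι → X) × X ↦ τ z.2 i := by fun_prop
  have hτcoordG (i : ι) (g : G) (z : (ι → X) × X) : τ (g • z).2 i = g • τ z.2 i :=
    congrFun (hτG g z.2) i
  have hK : IsClosed K := (hN.preimage continuous_fst).inter <|
    isClosed_iInter fun i ↦ hE.preimage ((hcoord i).prodMk (hτcoord i))
  have hKG (g : G) : ∀ z ∈ K, g • z ∈ K := by
    refine fun z ⟨hzN, hzE⟩ ↦ ⟨hNG g z.1 hzN, Set.mem_iInter.2 fun i ↦ ?_⟩
    rw [Set.mem_ofPred_eq, hτcoordG]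
    exact hEG g _ (Set.mem_iInter.1 hzE i)
  obtain ⟨⟨b, y⟩, hby, hb⟩ := exists_forall_eq_of_isProximalPair hK.isCompact
    ⟨(a, x), ha, Set.mem_iInter.2 hax⟩ hKG hcoord hτcoord (fun _ _ _ ↦ rfl) hτcoordG
    (fun i z hz ↦ hprox _ (Set.mem_iInter.1 hz.2 i))
  have hbτ : b = τ y := funext hb
  exact ⟨y, hbτ ▸ hby.1⟩

end Proximal

section Powers

variable {X Y : Type*}

theorem semiconj_zpow {π : X → Y} {σ : Equiv.Perm X} {σ' : Equiv.Perm Y}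
    (h : Function.Semiconj π σ σ') : ∀ n : ℤ, Function.Semiconj π ⇑(σ ^ n) ⇑(σ' ^ n)
  | (n : ℕ) => h.iterate_right n
  | .negSucc n =>
    (h.iterate_right (n + 1)).inverses_right (σ ^ (n + 1)).right_inv (σ' ^ (n + 1)).left_inv

theorem toEquiv_zpow [TopologicalSpace X] (T : X ≃ₜ X) (n : ℤ) :
    (T ^ n).toEquiv = T.toEquiv ^ n :=
  map_zpow (⟨⟨Homeomorph.toEquiv, rfl⟩, fun _ _ ↦ rfl⟩ : (X ≃ₜ X) →* Equiv.Perm X) T n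

theorem continuous_toEquiv_zpow [TopologicalSpace X] (T : X ≃ₜ X) (n : ℤ) :
    Continuous (T.toEquiv ^ n) :=
  toEquiv_zpow T n ▸ (T ^ n).continuous

theorem isMinimal_zpowers [TopologicalSpace X] {σ : Equiv.Perm X}
    (h : ∀ x, Dense (Set.range fun n : ℤ ↦ (σ ^ n) x)) :
    MulAction.IsMinimal (Subgroup.zpowers σ) X where
  dense_orbit x := (h x).mono <| by
    rintro _ ⟨n, rfl⟩
    exact ⟨⟨σ ^ n, n, rfl⟩, rfl⟩

theorem isProximalPair_zpowers [PseudoMetricSpace X] {σ : Equiv.Perm X} {x y : X}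
    (h : ∀ ε > 0, ∃ n : ℤ, dist ((σ ^ n) x) ((σ ^ n) y) < ε) :
    IsProximalPair (Subgroup.zpowers σ) x y := fun ε hε ↦
  let ⟨n, hn⟩ := h ε hε
  ⟨⟨σ ^ n, n, rfl⟩, hn⟩

/-- The tuple `(σ^n x, σ^{2n} x, …, σ^{dn} x)`, a generator of `N_d`; the coordinate `i : Fin d`
carries the exponent `(i + 1) * n`. -/
def progressionTuple (σ : Equiv.Perm X) (d : ℕ) (n : ℤ) (x : X) : Fin d → X :=
  fun i ↦ (σ ^ (((i : ℕ) + 1 : ℤ) * n)) x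

theorem comp_progressionTuple {π : X → Y} {σ : Equiv.Perm X} {σ' : Equiv.Perm Y}
    (h : Function.Semiconj π σ σ') (d : ℕ) (n : ℤ) (x : X) :
    π ∘ progressionTuple σ d n x = progressionTuple σ' d n (π x) :=
  funext fun _ ↦ semiconj_zpow h _ x

theorem continuous_progressionTuple [TopologicalSpace X] (T : X ≃ₜ X) (d : ℕ) (n : ℤ) :
    Continuous (progressionTuple T.toEquiv d n) :=
  continuous_pi fun _ ↦ continuous_toEquiv_zpow T _

end Powers

section Nd

variable {X Y : Type*} [MetricSpace X] [MetricSpace Y] {d : ℕ}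

theorem progressionTuple_mem_Nd (T : X ≃ₜ X) (n : ℤ) (x : X) :
    progressionTuple T.toEquiv d n x ∈ Nd T d :=
  subset_closure ⟨x, n, fun _ ↦ rfl⟩

theorem Nd_subset {T : X ≃ₜ X} {N : Set (Fin d → X)} (hN : IsClosed N)
    (h : ∀ n x, progressionTuple T.toEquiv d n x ∈ N) : Nd T d ⊆ N := by
  refine closure_minimal ?_ hN
  rintro c ⟨x, n, hc⟩
  exact (funext hc : c = progressionTuple T.toEquiv d n x) ▸ h n x

theorem comp_mem_Nd {T : X ≃ₜ X} {T' : Y ≃ₜ Y} {π : X → Y} (hπ : Continuous π)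
    (hπT : Function.Semiconj π T T') {a : Fin d → X} (ha : a ∈ Nd T d) : π ∘ a ∈ Nd T' d := by
  have hcont : Continuous fun a : Fin d → X ↦ π ∘ a := by fun_prop
  refine Nd_subset (isClosed_closure.preimage hcont) (fun n x ↦ ?_) ha
  rw [Set.mem_preimage, comp_progressionTuple hπT]
  exact progressionTuple_mem_Nd T' n (π x)

theorem exists_comp_eq_of_mem_Nd [CompactSpace X] {T : X ≃ₜ X} {T' : Y ≃ₜ Y} {π : X → Y}
    (hπ : Continuous π) (hπsurj : Function.Surjective π) (hπT : Function.Semiconj π T T')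
    {b : Fin d → Y} (hb : b ∈ Nd T' d) : ∃ a ∈ Nd T d, π ∘ a = b := by
  have hcont : Continuous fun a : Fin d → X ↦ π ∘ a := by fun_prop
  have hcompact : IsCompact (Nd T d) := isClosed_closure.isCompact
  refine Nd_subset (hcompact.image hcont).isClosed (fun n y ↦ ?_) hb
  obtain ⟨x, rfl⟩ := hπsurj y
  exact ⟨_, progressionTuple_mem_Nd T n x, comp_progressionTuple hπT d n x⟩

theorem smul_mem_Nd {T : X ≃ₜ X} (g : Subgroup.zpowers T.toEquiv) {a : Fin d → X}
    (ha : a ∈ Nd T d) : g • a ∈ Nd T d := by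
  obtain ⟨_, k, rfl⟩ := g
  have hcomm : Commute (T.toEquiv ^ k) T.toEquiv := (Commute.refl T.toEquiv).zpow_left k
  exact comp_mem_Nd (continuous_toEquiv_zpow T k) (fun x ↦ congrArg (· x) hcomm.eq) ha

theorem progressionTuple_mem_Nd_of_isProximalPair [CompactSpace X] {S T : X ≃ₜ X}
    (hcomm : Commute S.toEquiv T.toEquiv) {S' : Y ≃ₜ Y} {π : X → Y} (hπ : Continuous π)
    (hπsurj : Function.Surjective π) (hπS : Function.Semiconj π S S')
    [MulAction.IsMinimal (Subgroup.zpowers S.toEquiv) X]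
    (hprox : ∀ x₁ x₂, π x₁ = π x₂ → IsProximalPair (Subgroup.zpowers S.toEquiv) x₁ x₂)
    {n : ℤ} {x : X} (hx : π ∘ progressionTuple T.toEquiv d n x ∈ Nd S' d) :
    progressionTuple T.toEquiv d n x ∈ Nd S d := by
  have hNd : IsClosed (Nd S d) := isClosed_closure
  have hτ : Continuous (progressionTuple T.toEquiv d n) := continuous_progressionTuple T d n
  have hτS (g : Subgroup.zpowers S.toEquiv) (z : X) : progressionTuple T.toEquiv d n (g • z) =
      g • progressionTuple T.toEquiv d n z := by
    obtain ⟨_, k, rfl⟩ := g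
    exact (comp_progressionTuple (fun x ↦ congrArg (· x) (hcomm.zpow_left k).eq) d n z).symm
  have hfibre (g : Subgroup.zpowers S.toEquiv) (p : X × X) (hp : π p.1 = π p.2) :
      π (g • p).1 = π (g • p).2 := by
    obtain ⟨_, k, rfl⟩ := g
    have hk : Function.Semiconj π ⇑(S.toEquiv ^ k) ⇑(S'.toEquiv ^ k) := semiconj_zpow hπS k
    exact (hk p.1).trans ((congrArg _ hp).trans (hk p.2).symm)
  obtain ⟨a, ha, hax⟩ := exists_comp_eq_of_mem_Nd hπ hπsurj hπS hx
  obtain ⟨y, hy⟩ := exists_mem_of_isProximalPair (E := {p : X × X | π p.1 = π p.2})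
    (isClosed_eq (by fun_prop) (by fun_prop)) hfibre (fun p ↦ hprox p.1 p.2)
    hNd (fun g _ ↦ smul_mem_Nd g) hτ hτS ha (congrFun hax)
  exact mem_of_denseRange_smul hNd (fun g _ ↦ smul_mem_Nd g) hτ hτS
    (denseRange_smul (Subgroup.zpowers S.toEquiv) y) hy x

theorem Nd_subset_Nd_of_isProximalPair [CompactSpace X] {S T : X ≃ₜ X}
    (hcomm : Commute S.toEquiv T.toEquiv) {S' T' : Y ≃ₜ Y} {π : X → Y} (hπ : Continuous π)
    (hπsurj : Function.Surjective π) (hπS : Function.Semiconj π S S')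
    (hπT : Function.Semiconj π T T') [MulAction.IsMinimal (Subgroup.zpowers S.toEquiv) X]
    (hprox : ∀ x₁ x₂, π x₁ = π x₂ → IsProximalPair (Subgroup.zpowers S.toEquiv) x₁ x₂)
    (hNd : Nd T' d ⊆ Nd S' d) : Nd T d ⊆ Nd S d :=
  Nd_subset isClosed_closure fun n x ↦
    progressionTuple_mem_Nd_of_isProximalPair hcomm hπ hπsurj hπS hprox
      (hNd (comp_mem_Nd hπ hπT (progressionTuple_mem_Nd T n x)))

end Nd

/-- Let `S, T` be commuting homeomorphisms of a compact metric space `X`, let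
`S', T'` be homeomorphisms of a compact metric space `Y`, and let `π : X → Y` be
a continuous surjection with `π ∘ S = S' ∘ π` and `π ∘ T = T' ∘ π`. Assume
`(X,S)`, `(X,T)`, `(Y,S')`, `(Y,T')` are all minimal, and that `π` is a proximal
extension both for `S` and for `T`. If `N_d(Y,S') = N_d(Y,T')` for some `d ∈ ℕ`,
then `N_d(X,S) = N_d(X,T)`. -/
theorem nd_eq_of_proximal_extension
    {X Y : Type*} [MetricSpace X] [CompactSpace X] [MetricSpace Y] [CompactSpace Y]
    (S T : X ≃ₜ X) (S' T' : Y ≃ₜ Y)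
    (hcomm : ∀ x : X, S (T x) = T (S x))
    (π : X → Y) (hπcont : Continuous π) (hπsurj : Function.Surjective π)
    (hπS : ∀ x, π (S x) = S' (π x)) (hπT : ∀ x, π (T x) = T' (π x))
    (hSmin : ∀ x : X, Dense (Set.range fun n : ℤ => (S.toEquiv ^ n) x))
    (hTmin : ∀ x : X, Dense (Set.range fun n : ℤ => (T.toEquiv ^ n) x))
    (hS'min : ∀ y : Y, Dense (Set.range fun n : ℤ => (S'.toEquiv ^ n) y))
    (hT'min : ∀ y : Y, Dense (Set.range fun n : ℤ => (T'.toEquiv ^ n) y))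
    (hproxS : ∀ x₁ x₂ : X, π x₁ = π x₂ →
      ∀ ε > 0, ∃ n : ℤ, dist ((S.toEquiv ^ n) x₁) ((S.toEquiv ^ n) x₂) < ε)
    (hproxT : ∀ x₁ x₂ : X, π x₁ = π x₂ →
      ∀ ε > 0, ∃ n : ℤ, dist ((T.toEquiv ^ n) x₁) ((T.toEquiv ^ n) x₂) < ε)
    (d : ℕ) (hNdY : Nd S' d = Nd T' d) :
    Nd S d = Nd T d := by
  have hST : Commute S.toEquiv T.toEquiv := Equiv.ext hcomm
  have := isMinimal_zpowers hSmin
  have := isMinimal_zpowers hTmin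
  have hSproximal x₁ x₂ (h : π x₁ = π x₂) := isProximalPair_zpowers (hproxS x₁ x₂ h)
  have hTproximal x₁ x₂ (h : π x₁ = π x₂) := isProximalPair_zpowers (hproxT x₁ x₂ h)
  exact Set.Subset.antisymm
    (Nd_subset_Nd_of_isProximalPair hST.symm hπcont hπsurj hπT hπS hTproximal hNdY.subset)
    (Nd_subset_Nd_of_isProximalPair hST hπcont hπsurj hπS hπT hSproximal hNdY.superset)
end

section
/- Let (X,T) be a system and (X̃,{T^t}_{t∈ℝ}) its suspension flow. If A ⊆ ℝ and [x,s] ∈ X̃ are such that {T^t[x,s] : t ∈ A} is dense in X̃, then {T^{⌊t⌋}x : t ∈ A} is dense in X, where ⌊t⌋ denotes the integer part of t. -/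
/-!
The quotient map `q : X × ℝ → Xt` is open, because the saturation of an open set is the union of its
translates under the deck homeomorphisms `(y, r) ↦ (T ^ n y, r - n)`. Hence a nonempty open `U ⊆ X`
yields a nonempty open set `q (U × (s, s + 1))`, which the dense orbit visits at some time `t ∈ A`.
The only representative of `q (x, s + t)` with second coordinate in `[s, s + 1)` has first
coordinate `T ^ ⌊t⌋ x`, so this point lies in `U`.
-/

/-- `(Xt, q, φ)` is (a realization of) the suspension flow of the system `(X,T)`. -/
def IsSuspension {X Xt : Type*} [TopologicalSpace X] [TopologicalSpace Xt]
    (T : X ≃ₜ X) (q : X × ℝ → Xt) (φ : ℝ → Xt → Xt) : Prop :=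
  Topology.IsQuotientMap q ∧
    (∀ (x y : X) (s t : ℝ),
      (q (x, s) = q (y, t) ↔ ∃ n : ℤ, (n : ℝ) = s - t ∧ (T.toEquiv ^ n) x = y)) ∧
    (Continuous fun p : ℝ × Xt => φ p.1 p.2) ∧
    (∀ z, φ 0 z = z) ∧ (∀ s t z, φ (s + t) z = φ s (φ t z)) ∧
    (∀ (t : ℝ) (x : X) (s : ℝ), φ t (q (x, s)) = q (x, s + t))

theorem homeomorph_toEquiv_zpow {X : Type*} [TopologicalSpace X] (T : X ≃ₜ X) (n : ℤ) :
    (T ^ n).toEquiv = T.toEquiv ^ n :=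
  map_zpow (MonoidHom.mk' Homeomorph.toEquiv fun _ _ => rfl) T n

/-- The action of `n : ℤ` on `X × ℝ` by deck transformations of the projection onto the suspension
of `T`; the sign of the shift comes from the identification `(x, s) ∼ (T ^ n x, s - n)`. -/
def suspensionDeck {X : Type*} [TopologicalSpace X] (T : X ≃ₜ X) (n : ℤ) : X × ℝ ≃ₜ X × ℝ :=
  (T ^ n).prodCongr (Homeomorph.subRight (n : ℝ))

theorem suspensionDeck_apply {X : Type*} [TopologicalSpace X] (T : X ≃ₜ X) (n : ℤ) (p : X × ℝ) :
    suspensionDeck T n p = ((T.toEquiv ^ n) p.1, p.2 - n) := by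
  rw [← homeomorph_toEquiv_zpow]
  rfl

namespace IsSuspension

variable {X Xt : Type*} [TopologicalSpace X] [TopologicalSpace Xt]
  {T : X ≃ₜ X} {q : X × ℝ → Xt} {φ : ℝ → Xt → Xt}

theorem isQuotientMap (h : IsSuspension T q φ) : Topology.IsQuotientMap q :=
  h.1

theorem flow_apply (h : IsSuspension T q φ) (t : ℝ) (x : X) (s : ℝ) :
    φ t (q (x, s)) = q (x, s + t) :=
  h.2.2.2.2.2 t x s

theorem apply_eq_apply_iff (h : IsSuspension T q φ) {p p' : X × ℝ} :
    q p = q p' ↔ ∃ n : ℤ, suspensionDeck T n p = p' := by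
  obtain ⟨x, s⟩ := p
  obtain ⟨y, t⟩ := p'
  refine (h.2.1 x y s t).trans (exists_congr fun n => ?_)
  rw [suspensionDeck_apply, Prod.mk.injEq, and_comm, eq_sub_iff_add_eq', sub_eq_iff_eq_add,
    eq_comm (a := s)]

theorem preimage_image_eq_iUnion (h : IsSuspension T q φ) (V : Set (X × ℝ)) :
    q ⁻¹' (q '' V) = ⋃ n : ℤ, suspensionDeck T n ⁻¹' V := by
  ext p
  simp only [Set.mem_preimage, Set.mem_image, Set.mem_iUnion, eq_comm (b := q p),
    h.apply_eq_apply_iff]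
  constructor
  · rintro ⟨_, hV, n, rfl⟩
    exact ⟨n, hV⟩
  · rintro ⟨n, hV⟩
    exact ⟨_, hV, n, rfl⟩

theorem isOpenMap (h : IsSuspension T q φ) : IsOpenMap q := by
  intro V hV
  rw [← h.isQuotientMap.isOpen_preimage, h.preimage_image_eq_iUnion]
  exact isOpen_iUnion fun n => hV.preimage (suspensionDeck T n).continuous

theorem zpow_floor_apply_eq (h : IsSuspension T q φ) {x y : X} {s r t : ℝ}
    (hr : r ∈ Set.Ico s (s + 1)) (hxy : φ t (q (x, s)) = q (y, r)) :
    (T.toEquiv ^ ⌊t⌋) x = y := by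
  rw [h.flow_apply, h.apply_eq_apply_iff] at hxy
  obtain ⟨n, hn⟩ := hxy
  rw [suspensionDeck_apply, Prod.mk.injEq] at hn
  obtain ⟨hTx, hheight⟩ := hn
  have hfloor : ⌊t⌋ = n := by
    rw [Int.floor_eq_iff]
    constructor <;> linarith [hr.1, hr.2]
  rw [hfloor, hTx]

end IsSuspension

theorem dense_floor_orbit_of_dense_suspension_orbit_general
    {X Xt : Type*} [TopologicalSpace X] [TopologicalSpace Xt]
    (T : X ≃ₜ X) (q : X × ℝ → Xt) (φ : ℝ → Xt → Xt) (hsusp : IsSuspension T q φ)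
    (A : Set ℝ) (x : X) (s : ℝ)
    (hdense : Dense ((fun t => φ t (q (x, s))) '' A)) :
    Dense ((fun t : ℝ => (T.toEquiv ^ ⌊t⌋) x) '' A) := by
  rw [dense_iff_inter_open]
  intro U hU hU_nonempty
  have hstrip_open : IsOpen (q '' (U ×ˢ Set.Ioo s (s + 1))) :=
    hsusp.isOpenMap _ (hU.prod isOpen_Ioo)
  have hstrip_nonempty : (q '' (U ×ˢ Set.Ioo s (s + 1))).Nonempty :=
    (hU_nonempty.prod (Set.nonempty_Ioo.2 (lt_add_one s))).image q
  obtain ⟨_, ⟨⟨y, r⟩, ⟨hyU, hr⟩, hyr⟩, t, htA, rfl⟩ :=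
    hdense.inter_open_nonempty _ hstrip_open hstrip_nonempty
  have hy : (T.toEquiv ^ ⌊t⌋) x = y :=
    hsusp.zpow_floor_apply_eq (Set.Ioo_subset_Ico_self hr) hyr.symm
  exact ⟨y, hyU, t, htA, hy⟩

/-- Let `(X,T)` be a system and `(X̃,{T^t})` its suspension flow. If `A ⊆ ℝ` and
`[x,s] ∈ X̃` are such that `{T^t [x,s] : t ∈ A}` is dense in `X̃`, then
`{T^⌊t⌋ x : t ∈ A}` is dense in `X`. -/
theorem dense_floor_orbit_of_dense_suspension_orbit
    {X Xt : Type*} [MetricSpace X] [CompactSpace X]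
    [MetricSpace Xt] [CompactSpace Xt]
    (T : X ≃ₜ X) (q : X × ℝ → Xt) (φ : ℝ → Xt → Xt) (hsusp : IsSuspension T q φ)
    (A : Set ℝ) (x : X) (s : ℝ)
    (hdense : Dense ((fun t => φ t (q (x, s))) '' A)) :
    Dense ((fun t : ℝ => (T.toEquiv ^ ⌊t⌋) x) '' A) :=
  dense_floor_orbit_of_dense_suspension_orbit_general T q φ hsusp A x s hdense
end
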